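/- Regard the normalizing constants h_k = h_k(t) as functions of t on the interval (γ, ∞) (with γ > 0 and the integer m ≥ 0 fixed). Then for every N ≥ 1 the Toda equation holds: (d²/dt²) ln ( ∏_{k=0}^{N−1} h_k(t) ) = 4 · h_N(t) / h_{N−1}(t). -/

import Mathlib

open scoped Classical

namespace SixVertex

/-- The discrete weight `w(x) = (e^{-2(t-γ)(x+m+1)} - e^{-2(t+γ)(x+m+1)}) ∏_{k=1}^m (x+k)`
on the nonnegative integers. -/
noncomputable def wfun (t γ : ℝ) (m : ℕ) (x : ℕ) : ℝ :=
  (Real.exp (-2 * (t - γ) * ((x : ℝ) + m + 1)) - Real.exp (-2 * (t + γ) * ((x : ℝ) + m + 1)))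
    * ∏ k ∈ Finset.Icc 1 m, ((x : ℝ) + k)

/-- The Meixner weight `w^M(x) = e^{-2(t-γ)(x+m+1)} ∏_{k=1}^m (x+k)` on the
nonnegative integers. -/
noncomputable def wM (t γ : ℝ) (m : ℕ) (x : ℕ) : ℝ :=
  Real.exp (-2 * (t - γ) * ((x : ℝ) + m + 1)) * ∏ k ∈ Finset.Icc 1 m, ((x : ℝ) + k)

/-- `IsMonicOPS w p h` says that `(p k)` is the system of monic orthogonal polynomials
on the nonnegative integers for the discrete weight `w`, with normalizing constants
`h k > 0`: each `p k` is monic of degree `k` and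
`Σ_{x=0}^∞ p j (x) p k (x) w(x) = h k δ_{jk}` (the sums converging absolutely). -/
def IsMonicOPS (w : ℕ → ℝ) (p : ℕ → Polynomial ℝ) (h : ℕ → ℝ) : Prop :=
  (∀ k, (p k).Monic ∧ (p k).natDegree = k) ∧ (∀ k, 0 < h k) ∧
    ∀ j k, HasSum (fun x : ℕ => (p j).eval (x : ℝ) * (p k).eval (x : ℝ) * w x)
      (if j = k then h k else 0)

/-!
Write `L_s f = Σ f(x) w_s(x)` for a weight `w_s(x) = e^{s(ax+b)} v(x)`, so that
`d/ds L_s f = L_s ((aX + b) f)`. The orthogonal polynomials at two parameters `s`, `t` satisfy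

* `h_k(s) - h_k(t) = (L_s - L_t)(p_{k,s} p_{k,t})`, since both polynomials are monic, and
* `0 = L_s (p_{k+1,s} p_{k,t})
    = (L_s - L_t)(p_{k+1,s} p_{k,t}) + (c_{k+1}(s) - c_{k+1}(t)) h_k(t)`,

where `c_k` is the coefficient of `x^{k-1}` in `p_k` (and `c_0 = 0`). Dividing by `s - t` and
letting `s → t`, which only requires the coefficients of `p_{k,s}` to be continuous in `s`, gives
`h_k' = (a (c_k - c_{k+1}) + b) h_k` and `c_{k+1}' = -a h_{k+1} / h_k`. The first identity
telescopes to `(log ∏_{k<N} h_k)' = N b - a c_N`, and the second one differentiates this once more.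
-/

open Polynomial Filter Topology

theorem hasDerivAt_mul_of_eq_zero {𝕜 : Type*} [NontriviallyNormedField 𝕜] {c g : 𝕜 → 𝕜}
    {g' t : 𝕜} (hc : ContinuousAt c t) (hg : HasDerivAt g g' t) (hgt : g t = 0) :
    HasDerivAt (fun s => c s * g s) (c t * g') t := by
  rw [hasDerivAt_iff_tendsto_slope] at hg ⊢
  refine ((hc.tendsto.mono_left nhdsWithin_le_nhds).mul hg).congr fun s => ?_
  simp only [slope_def_field, hgt, mul_zero, sub_zero, mul_div_assoc]

section Moments

/-- The weight `w` on `ℕ` has finite moments: polynomials are absolutely summable against it. -/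
def HasMoments (w : ℕ → ℝ) : Prop :=
  ∀ f : ℝ[X], Summable fun x : ℕ => f.eval (x : ℝ) * w x

/-- The moment functional `f ↦ Σ_x f(x) w(x)` of a weight `w` on `ℕ`. It is a plain function, with
the junk value of `tsum` where the sum diverges, and is linear only when `HasMoments w`. -/
noncomputable def momentFunctional (w : ℕ → ℝ) (f : ℝ[X]) : ℝ :=
  ∑' x : ℕ, f.eval (x : ℝ) * w x

variable {w : ℕ → ℝ}

theorem momentFunctional_zero : momentFunctional w 0 = 0 := by
  simp [momentFunctional]

theorem momentFunctional_smul (c : ℝ) (f : ℝ[X]) :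
    momentFunctional w (c • f) = c * momentFunctional w f := by
  simp only [momentFunctional, eval_smul, smul_eq_mul, mul_assoc, tsum_mul_left]

namespace HasMoments

theorem momentFunctional_add (hw : HasMoments w) (f g : ℝ[X]) :
    momentFunctional w (f + g) = momentFunctional w f + momentFunctional w g := by
  simp only [momentFunctional, eval_add, add_mul, (hw f).tsum_add (hw g)]

theorem momentFunctional_sub (hw : HasMoments w) (f g : ℝ[X]) :
    momentFunctional w (f - g) = momentFunctional w f - momentFunctional w g := by
  simp only [momentFunctional, eval_sub, sub_mul, (hw f).tsum_sub (hw g)]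

theorem momentFunctional_sum {ι : Type*} (hw : HasMoments w) (s : Finset ι) (F : ι → ℝ[X]) :
    momentFunctional w (∑ i ∈ s, F i) = ∑ i ∈ s, momentFunctional w (F i) := by
  simp only [momentFunctional, eval_finsetSum, Finset.sum_mul]
  exact Summable.tsum_finsetSum fun i _ => hw (F i)

theorem momentFunctional_mul_eq_sum (hw : HasMoments w) (g : ℝ[X]) {f : ℝ[X]} {n : ℕ}
    (hf : f.natDegree < n) :
    momentFunctional w (g * f) =
      ∑ i ∈ Finset.range n, f.coeff i * momentFunctional w (g * X ^ i) := by
  conv_lhs => rw [f.as_sum_range_C_mul_X_pow' hf, Finset.mul_sum, hw.momentFunctional_sum]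
  refine Finset.sum_congr rfl fun i _ => ?_
  rw [← smul_eq_C_mul, mul_smul_comm, momentFunctional_smul]

end HasMoments

end Moments

namespace IsMonicOPS

variable {w : ℕ → ℝ} {p : ℕ → ℝ[X]} {h : ℕ → ℝ}

theorem monic (H : IsMonicOPS w p h) (k : ℕ) : (p k).Monic := (H.1 k).1

theorem natDegree_eq (H : IsMonicOPS w p h) (k : ℕ) : (p k).natDegree = k := (H.1 k).2

theorem normConst_pos (H : IsMonicOPS w p h) (k : ℕ) : 0 < h k := H.2.1 k

theorem degree_eq (H : IsMonicOPS w p h) (k : ℕ) : (p k).degree = k := by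
  rw [degree_eq_natDegree (H.monic k).ne_zero, H.natDegree_eq]

theorem coeff_self (H : IsMonicOPS w p h) (k : ℕ) : (p k).coeff k = 1 := by
  simpa only [H.natDegree_eq] using (H.monic k).coeff_natDegree

theorem coeff_succ_self (H : IsMonicOPS w p h) (k : ℕ) : (p k).coeff (k + 1) = 0 :=
  coeff_eq_zero_of_natDegree_lt ((H.natDegree_eq k).trans_lt k.lt_succ_self)

theorem nextCoeff_zero (H : IsMonicOPS w p h) : (p 0).nextCoeff = 0 := by
  simp [nextCoeff, H.natDegree_eq]

theorem nextCoeff_succ (H : IsMonicOPS w p h) (k : ℕ) :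
    (p (k + 1)).nextCoeff = (p (k + 1)).coeff k := by
  simp [nextCoeff, H.natDegree_eq]

theorem coeff_X_mul_self (H : IsMonicOPS w p h) (k : ℕ) : (X * p k).coeff k = (p k).nextCoeff := by
  cases k with
  | zero => rw [coeff_X_mul_zero, H.nextCoeff_zero]
  | succ k => rw [coeff_X_mul, H.nextCoeff_succ]

theorem span_image_Iio (H : IsMonicOPS w p h) (n : ℕ) :
    Submodule.span ℝ (p '' Set.Iio n) = degreeLT ℝ n :=
  Sequence.span_degreeLT ⟨p, H.degree_eq⟩ fun k _ => by
    simp only [(H.monic k).leadingCoeff, isUnit_one]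

theorem hasMoments (H : IsMonicOPS w p h) : HasMoments w := by
  intro f
  have hp0 : p 0 = 1 := (H.monic 0).natDegree_eq_zero.1 (H.natDegree_eq 0)
  obtain ⟨n, hf⟩ : ∃ n, f ∈ degreeLT ℝ n := ⟨f.natDegree + 1, mem_degreeLT.2 <|
    degree_le_natDegree.trans_lt (WithBot.coe_lt_coe.2 f.natDegree.lt_succ_self)⟩
  rw [← H.span_image_Iio] at hf
  induction hf using Submodule.span_induction with
  | mem _ hx =>
    obtain ⟨j, -, rfl⟩ := hx
    simpa [hp0] using (H.2.2 j 0).summable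
  | zero => simp
  | add f g _ _ hf hg => simpa only [eval_add, add_mul] using hf.add hg
  | smul c f _ hf => simpa only [eval_smul, smul_eq_mul, mul_assoc] using hf.mul_left c

theorem momentFunctional_mul (H : IsMonicOPS w p h) (j k : ℕ) :
    momentFunctional w (p j * p k) = if j = k then h k else 0 := by
  simpa only [momentFunctional, eval_mul] using (H.2.2 j k).tsum_eq

theorem momentFunctional_mul_self (H : IsMonicOPS w p h) (k : ℕ) :
    momentFunctional w (p k * p k) = h k := by
  rw [H.momentFunctional_mul, if_pos rfl]

theorem momentFunctional_mul_of_mem_degreeLT (H : IsMonicOPS w p h) {f : ℝ[X]} {k : ℕ}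
    (hf : f ∈ degreeLT ℝ k) : momentFunctional w (f * p k) = 0 := by
  rw [← H.span_image_Iio] at hf
  induction hf using Submodule.span_induction with
  | mem _ hx =>
    obtain ⟨j, hj, rfl⟩ := hx
    rw [H.momentFunctional_mul, if_neg (Set.mem_Iio.1 hj).ne]
  | zero => rw [zero_mul, momentFunctional_zero]
  | add f g _ _ hf hg => rw [add_mul, H.hasMoments.momentFunctional_add, hf, hg, add_zero]
  | smul c f _ hf => rw [smul_mul_assoc, momentFunctional_smul, hf, mul_zero]

theorem momentFunctional_mul_of_natDegree_le (H : IsMonicOPS w p h) {f : ℝ[X]} {k : ℕ}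
    (hf : f.natDegree ≤ k) : momentFunctional w (f * p k) = f.coeff k * h k := by
  have hlt : (f - f.coeff k • p k) ∈ degreeLT ℝ k := by
    rw [mem_degreeLT, degree_lt_iff_coeff_zero]
    intro i hi
    rcases hi.eq_or_lt with rfl | hi
    · simp [H.coeff_self]
    · simp [coeff_eq_zero_of_natDegree_lt (hf.trans_lt hi),
        coeff_eq_zero_of_natDegree_lt ((H.natDegree_eq k).trans_lt hi)]
  have horth := H.momentFunctional_mul_of_mem_degreeLT hlt
  rwa [sub_mul, smul_mul_assoc, H.hasMoments.momentFunctional_sub, momentFunctional_smul,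
    H.momentFunctional_mul_self, sub_eq_zero] at horth

theorem momentFunctional_mul_of_natDegree_le_succ (H : IsMonicOPS w p h) {f : ℝ[X]} {k : ℕ}
    (hf : f.natDegree ≤ k + 1) :
    momentFunctional w (f * p k) =
      (f.coeff k - f.coeff (k + 1) * (p (k + 1)).nextCoeff) * h k := by
  have hle : (f - f.coeff (k + 1) • p (k + 1)).natDegree ≤ k := by
    rw [natDegree_le_iff_coeff_eq_zero]
    intro i hi
    rcases (Nat.succ_le_of_lt hi).eq_or_lt with rfl | hi
    · simp [H.coeff_self]
    · simp [coeff_eq_zero_of_natDegree_lt (hf.trans_lt hi),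
        coeff_eq_zero_of_natDegree_lt ((H.natDegree_eq (k + 1)).trans_lt hi)]
  have hlead := H.momentFunctional_mul_of_natDegree_le hle
  rwa [sub_mul, smul_mul_assoc, H.hasMoments.momentFunctional_sub, momentFunctional_smul,
    H.momentFunctional_mul, if_neg k.succ_ne_self, mul_zero, sub_zero, coeff_sub, coeff_smul,
    smul_eq_mul, ← H.nextCoeff_succ] at hlead

theorem natDegree_affine_mul_le (H : IsMonicOPS w p h) (a b : ℝ) (k : ℕ) :
    ((C a * X + C b) * p k).natDegree ≤ k + 1 :=
  natDegree_mul_le_of_le natDegree_linear_le (H.natDegree_eq k).le |>.trans_eq (add_comm 1 k)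

theorem momentFunctional_affine_mul_self (H : IsMonicOPS w p h) (a b : ℝ) (k : ℕ) :
    momentFunctional w ((C a * X + C b) * (p k * p k)) =
      (a * ((p k).nextCoeff - (p (k + 1)).nextCoeff) + b) * h k := by
  rw [← mul_assoc, H.momentFunctional_mul_of_natDegree_le_succ (H.natDegree_affine_mul_le a b k)]
  simp only [add_mul, mul_assoc, coeff_add, coeff_C_mul, coeff_X_mul, H.coeff_X_mul_self,
    H.coeff_self, H.coeff_succ_self]
  ring

theorem momentFunctional_affine_mul_succ (H : IsMonicOPS w p h) (a b : ℝ) (k : ℕ) :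
    momentFunctional w ((C a * X + C b) * (p (k + 1) * p k)) = a * h (k + 1) := by
  rw [mul_comm (p (k + 1)), ← mul_assoc,
    H.momentFunctional_mul_of_natDegree_le (H.natDegree_affine_mul_le a b k)]
  simp only [add_mul, mul_assoc, coeff_add, coeff_C_mul, coeff_X_mul, H.coeff_self,
    H.coeff_succ_self]
  ring

theorem eq_sum_of_mem_degreeLT (H : IsMonicOPS w p h) {f : ℝ[X]} {n : ℕ} (hf : f ∈ degreeLT ℝ n) :
    f = ∑ j ∈ Finset.range n, (momentFunctional w (f * p j) / h j) • p j := by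
  rw [← H.span_image_Iio] at hf
  induction hf using Submodule.span_induction with
  | mem _ hx =>
    obtain ⟨i, hi, rfl⟩ := hx
    rw [Finset.sum_eq_single_of_mem i (Finset.mem_range.2 hi) fun j _ hji => by
      rw [H.momentFunctional_mul, if_neg hji.symm, zero_div, zero_smul]]
    rw [H.momentFunctional_mul_self, div_self (H.normConst_pos i).ne', one_smul]
  | zero => simp [momentFunctional_zero]
  | add f g _ _ hf hg =>
    simp only [add_mul, H.hasMoments.momentFunctional_add, add_div, add_smul,
      Finset.sum_add_distrib]
    rw [← hf, ← hg]
  | smul c f _ hf =>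
    simp only [smul_mul_assoc, momentFunctional_smul, mul_div_assoc, mul_smul, ← Finset.smul_sum]
    rw [← hf]

theorem eq_X_pow_sub_sum (H : IsMonicOPS w p h) (n : ℕ) :
    p n = X ^ n - ∑ j ∈ Finset.range n, (momentFunctional w (X ^ n * p j) / h j) • p j := by
  have hlt : X ^ n - p n ∈ degreeLT ℝ n := by
    rw [mem_degreeLT]
    simpa only [degree_X_pow] using degree_sub_lt_left
      ((degree_X_pow n).trans (H.degree_eq n).symm) (monic_X_pow n).ne_zero
      ((monic_X_pow n).leadingCoeff.trans (H.monic n).leadingCoeff.symm)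
  have hcoord : ∀ j ∈ Finset.range n,
      momentFunctional w ((X ^ n - p n) * p j) = momentFunctional w (X ^ n * p j) := fun j hj => by
    rw [sub_mul, H.hasMoments.momentFunctional_sub, H.momentFunctional_mul,
      if_neg (Finset.mem_range.1 hj).ne', sub_zero]
  have hexp := H.eq_sum_of_mem_degreeLT hlt
  rw [Finset.sum_congr rfl fun j hj => by rw [hcoord j hj]] at hexp
  rw [← hexp, sub_sub_cancel]

end IsMonicOPS

/-- A family of real polynomials that near `t` has bounded degree and whose coefficients are
continuous at `t`, i.e. continuity at `t` as a map into some space of polynomials of bounded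
degree. -/
structure CoeffContinuousAt (F : ℝ → ℝ[X]) (t : ℝ) : Prop where
  eventually_natDegree_lt : ∃ n, ∀ᶠ s in 𝓝 t, (F s).natDegree < n
  coeff : ∀ i, ContinuousAt (fun s => (F s).coeff i) t

namespace CoeffContinuousAt

variable {F G : ℝ → ℝ[X]} {t : ℝ}

theorem const (f : ℝ[X]) (t : ℝ) : CoeffContinuousAt (fun _ => f) t :=
  ⟨⟨f.natDegree + 1, .of_forall fun _ => f.natDegree.lt_succ_self⟩, fun _ => continuousAt_const⟩

theorem mul (hF : CoeffContinuousAt F t) (hG : CoeffContinuousAt G t) :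
    CoeffContinuousAt (fun s => F s * G s) t := by
  constructor
  · obtain ⟨n, hn⟩ := hF.eventually_natDegree_lt
    obtain ⟨m, hm⟩ := hG.eventually_natDegree_lt
    refine ⟨n + m, ?_⟩
    filter_upwards [hn, hm] with s hns hms
    exact natDegree_mul_le.trans_lt (add_lt_add hns hms)
  · intro i
    simp only [coeff_mul]
    exact tendsto_finsetSum _ fun x _ => (hF.coeff x.1).mul (hG.coeff x.2)

end CoeffContinuousAt

section ExpWeight

/-- The one-parameter family of weights `s ↦ e^{s(ax+b)} v(x)` on `ℕ`, whose normalizing constants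
evolve by the Toda flow in `s`. -/
noncomputable def expWeight (a b : ℝ) (v : ℕ → ℝ) (s : ℝ) (x : ℕ) : ℝ :=
  Real.exp (s * (a * x + b)) * v x

variable {a b : ℝ} {v : ℕ → ℝ} {t : ℝ}

theorem hasDerivAt_expWeight (a b : ℝ) (v : ℕ → ℝ) (t : ℝ) (x : ℕ) :
    HasDerivAt (fun s => expWeight a b v s x) ((a * x + b) * expWeight a b v t x) t := by
  refine ((hasDerivAt_mul_const (a * (x : ℝ) + b)).exp.mul_const (v x)).congr_deriv ?_
  rw [expWeight]
  ring

theorem abs_expWeight_le_add {r₁ r₂ s : ℝ} (h₁ : r₁ ≤ s) (h₂ : s ≤ r₂) (x : ℕ) :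
    |expWeight a b v s x| ≤ |expWeight a b v r₁ x| + |expWeight a b v r₂ x| := by
  simp only [expWeight, abs_mul, Real.abs_exp, ← add_mul]
  gcongr
  rcases le_total 0 (a * (x : ℝ) + b) with hc | hc
  · exact (Real.exp_le_exp.2 (mul_le_mul_of_nonneg_right h₂ hc)).trans
      (le_add_of_nonneg_left (Real.exp_pos _).le)
  · exact (Real.exp_le_exp.2 (mul_le_mul_of_nonpos_right h₁ hc)).trans
      (le_add_of_nonneg_right (Real.exp_pos _).le)

theorem hasDerivAt_momentFunctional
    (hw : ∀ᶠ s in 𝓝 t, HasMoments (expWeight a b v s)) (f : ℝ[X]) :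
    HasDerivAt (fun s => momentFunctional (expWeight a b v s) f)
      (momentFunctional (expWeight a b v t) ((C a * X + C b) * f)) t := by
  obtain ⟨r₁, hw₁, hr₁⟩ :=
    ((hw.filter_mono nhdsWithin_le_nhds).and (self_mem_nhdsWithin (s := Set.Iio t))).exists
  obtain ⟨r₂, hw₂, hr₂⟩ :=
    ((hw.filter_mono nhdsWithin_le_nhds).and (self_mem_nhdsWithin (s := Set.Ioi t))).exists
  have ht : t ∈ Set.Ioo r₁ r₂ := ⟨hr₁, hr₂⟩
  let g : ℝ[X] := (C a * X + C b) * f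
  refine hasDerivAt_tsum_of_isPreconnected
    (g := fun (x : ℕ) s => f.eval (x : ℝ) * expWeight a b v s x)
    (g' := fun (x : ℕ) s => g.eval (x : ℝ) * expWeight a b v s x)
    ((hw₁ g).abs.add (hw₂ g).abs) isOpen_Ioo isPreconnected_Ioo ?_ ?_ ht
    (hw.self_of_nhds f) ht
  · intro x s _
    refine ((hasDerivAt_expWeight a b v s x).const_mul (f.eval (x : ℝ))).congr_deriv ?_
    simp only [g, eval_mul, eval_add, eval_C, eval_X]
    ring
  · intro x s hs
    rw [Real.norm_eq_abs, abs_mul, abs_mul, abs_mul, ← mul_add]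
    exact mul_le_mul_of_nonneg_left (abs_expWeight_le_add hs.1.le hs.2.le x) (abs_nonneg _)

variable {F : ℝ → ℝ[X]}

theorem continuousAt_momentFunctional
    (hw : ∀ᶠ s in 𝓝 t, HasMoments (expWeight a b v s)) (hF : CoeffContinuousAt F t) :
    ContinuousAt (fun s => momentFunctional (expWeight a b v s) (F s)) t := by
  obtain ⟨n, hn⟩ := hF.eventually_natDegree_lt
  have hsum : ContinuousAt (fun s => ∑ i ∈ Finset.range n,
      (F s).coeff i * momentFunctional (expWeight a b v s) (1 * X ^ i)) t :=
    tendsto_finsetSum _ fun i _ => (hF.coeff i).mul (hasDerivAt_momentFunctional hw _).continuousAt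
  refine hsum.congr ?_
  filter_upwards [hw, hn] with s hws hns
  rw [← hws.momentFunctional_mul_eq_sum 1 hns, one_mul]

theorem hasDerivAt_momentFunctional_sub
    (hw : ∀ᶠ s in 𝓝 t, HasMoments (expWeight a b v s)) (hF : CoeffContinuousAt F t) :
    HasDerivAt (fun s => momentFunctional (expWeight a b v s) (F s) -
        momentFunctional (expWeight a b v t) (F s))
      (momentFunctional (expWeight a b v t) ((C a * X + C b) * F t)) t := by
  obtain ⟨n, hn⟩ := hF.eventually_natDegree_lt
  have hsum : HasDerivAt (fun s => ∑ i ∈ Finset.range n, (F s).coeff i *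
        (momentFunctional (expWeight a b v s) (1 * X ^ i) -
          momentFunctional (expWeight a b v t) (1 * X ^ i)))
      (∑ i ∈ Finset.range n, (F t).coeff i *
        momentFunctional (expWeight a b v t) ((C a * X + C b) * (1 * X ^ i))) t :=
    HasDerivAt.fun_sum fun i _ => hasDerivAt_mul_of_eq_zero (hF.coeff i)
      ((hasDerivAt_momentFunctional hw _).sub_const _) (sub_self _)
  simp only [one_mul] at hsum
  rw [← hw.self_of_nhds.momentFunctional_mul_eq_sum _ hn.self_of_nhds] at hsum
  refine hsum.congr_of_eventuallyEq ?_
  filter_upwards [hw, hn] with s hws hns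
  rw [← one_mul (F s), hws.momentFunctional_mul_eq_sum 1 hns,
    hw.self_of_nhds.momentFunctional_mul_eq_sum 1 hns, ← Finset.sum_sub_distrib]
  simp only [one_mul, mul_sub]

end ExpWeight

section TodaFlow

variable {a b : ℝ} {v : ℕ → ℝ} {t : ℝ} {p : ℝ → ℕ → ℝ[X]} {h : ℝ → ℕ → ℝ}

theorem coeffContinuousAt_ops
    (hops : ∀ᶠ s in 𝓝 t, IsMonicOPS (expWeight a b v s) (p s) (h s)) (k : ℕ) :
    CoeffContinuousAt (fun s => p s k) t := by
  have hw := hops.mono fun _ H => H.hasMoments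
  induction k using Nat.strong_induction_on with
  | _ k ih =>
  refine ⟨⟨k + 1, hops.mono fun s H => (H.natDegree_eq k).trans_lt k.lt_succ_self⟩, fun i => ?_⟩
  have hgram : ContinuousAt (fun s => (X ^ k : ℝ[X]).coeff i - ∑ j ∈ Finset.range k,
      momentFunctional (expWeight a b v s) (X ^ k * p s j) /
        momentFunctional (expWeight a b v s) (p s j * p s j) * (p s j).coeff i) t := by
    refine continuousAt_const.sub (tendsto_finsetSum _ fun j hj => ?_)
    have hpj := ih j (Finset.mem_range.1 hj)
    refine ((continuousAt_momentFunctional hw ((CoeffContinuousAt.const _ t).mul hpj)).div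
      (continuousAt_momentFunctional hw (hpj.mul hpj)) ?_).mul (hpj.coeff i)
    rw [hops.self_of_nhds.momentFunctional_mul_self]
    exact (hops.self_of_nhds.normConst_pos j).ne'
  refine hgram.congr ?_
  filter_upwards [hops] with s H
  conv_rhs => rw [H.eq_X_pow_sub_sum k]
  simp only [coeff_sub, finsetSum_coeff, coeff_smul, smul_eq_mul, H.momentFunctional_mul_self]

theorem hasDerivAt_normConst
    (hops : ∀ᶠ s in 𝓝 t, IsMonicOPS (expWeight a b v s) (p s) (h s)) (k : ℕ) :
    HasDerivAt (fun s => h s k)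
      ((a * ((p t k).nextCoeff - (p t (k + 1)).nextCoeff) + b) * h t k) t := by
  have Ht := hops.self_of_nhds
  have hdiff : ∀ᶠ s in 𝓝 t, h s k =
      (momentFunctional (expWeight a b v s) (p s k * p t k) -
        momentFunctional (expWeight a b v t) (p s k * p t k)) + h t k := by
    filter_upwards [hops] with s Hs
    have hs : momentFunctional (expWeight a b v s) (p s k * p t k) = h s k := by
      rw [mul_comm, Hs.momentFunctional_mul_of_natDegree_le (Ht.natDegree_eq k).le, Ht.coeff_self,
        one_mul]
    have ht : momentFunctional (expWeight a b v t) (p s k * p t k) = h t k := by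
      rw [Ht.momentFunctional_mul_of_natDegree_le (Hs.natDegree_eq k).le, Hs.coeff_self, one_mul]
    rw [hs, ht, sub_add_cancel]
  have hderiv := (hasDerivAt_momentFunctional_sub (hops.mono fun _ H => H.hasMoments)
    ((coeffContinuousAt_ops hops k).mul (.const (p t k) t))).add_const (h t k)
  exact (hderiv.congr_of_eventuallyEq hdiff).congr_deriv (Ht.momentFunctional_affine_mul_self a b k)

theorem hasDerivAt_nextCoeff
    (hops : ∀ᶠ s in 𝓝 t, IsMonicOPS (expWeight a b v s) (p s) (h s)) (n : ℕ) :
    HasDerivAt (fun s => (p s (n + 1)).nextCoeff) (-(a * h t (n + 1) / h t n)) t := by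
  have Ht := hops.self_of_nhds
  have hdiff : ∀ᶠ s in 𝓝 t, (p s (n + 1)).nextCoeff = (p t (n + 1)).nextCoeff -
      (momentFunctional (expWeight a b v s) (p s (n + 1) * p t n) -
        momentFunctional (expWeight a b v t) (p s (n + 1) * p t n)) / h t n := by
    filter_upwards [hops] with s Hs
    have hs : momentFunctional (expWeight a b v s) (p s (n + 1) * p t n) = 0 := by
      rw [mul_comm, Hs.momentFunctional_mul_of_natDegree_le (by simp [Ht.natDegree_eq]),
        Ht.coeff_succ_self, zero_mul]
    have ht : momentFunctional (expWeight a b v t) (p s (n + 1) * p t n) =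
        ((p s (n + 1)).nextCoeff - (p t (n + 1)).nextCoeff) * h t n := by
      rw [Ht.momentFunctional_mul_of_natDegree_le_succ (Hs.natDegree_eq _).le, Hs.coeff_self,
        one_mul, Hs.nextCoeff_succ]
    rw [hs, ht, zero_sub, neg_div, mul_div_cancel_right₀ _ (Ht.normConst_pos n).ne']
    ring
  have hderiv := ((hasDerivAt_momentFunctional_sub (hops.mono fun _ H => H.hasMoments)
    ((coeffContinuousAt_ops hops (n + 1)).mul (.const (p t n) t))).div_const (h t n)).const_sub
      (p t (n + 1)).nextCoeff
  refine (hderiv.congr_of_eventuallyEq hdiff).congr_deriv ?_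
  rw [Ht.momentFunctional_affine_mul_succ]

theorem hasDerivAt_log_prod_normConst
    (hops : ∀ᶠ s in 𝓝 t, IsMonicOPS (expWeight a b v s) (p s) (h s)) (N : ℕ) :
    HasDerivAt (fun s => Real.log (∏ k ∈ Finset.range N, h s k))
      (N * b - a * (p t N).nextCoeff) t := by
  have hlog : ∀ k, HasDerivAt (fun s => Real.log (h s k))
      (a * (p t k).nextCoeff - a * (p t (k + 1)).nextCoeff + b) t := fun k => by
    have hpos := (hops.self_of_nhds.normConst_pos k).ne'
    refine ((hasDerivAt_normConst hops k).log hpos).congr_deriv ?_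
    rw [mul_div_cancel_right₀ _ hpos, mul_sub]
  refine ((HasDerivAt.fun_sum fun k (_ : k ∈ Finset.range N) => hlog k).congr_of_eventuallyEq
    ?_).congr_deriv ?_
  · filter_upwards [hops] with s Hs
    exact Real.log_prod fun k _ => (Hs.normConst_pos k).ne'
  · rw [Finset.sum_add_distrib, Finset.sum_range_sub' fun k => a * (p t k).nextCoeff,
      hops.self_of_nhds.nextCoeff_zero, Finset.sum_const, Finset.card_range, nsmul_eq_mul]
    ring

theorem toda_equation_general
    (hops : ∀ᶠ s in 𝓝 t, IsMonicOPS (expWeight a b v s) (p s) (h s)) (n : ℕ) :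
    iteratedDeriv 2 (fun s => Real.log (∏ k ∈ Finset.range (n + 1), h s k)) t =
      a ^ 2 * h t (n + 1) / h t n := by
  have hderiv : deriv (fun s => Real.log (∏ k ∈ Finset.range (n + 1), h s k)) =ᶠ[𝓝 t]
      fun s => (n + 1 : ℕ) * b - a * (p s (n + 1)).nextCoeff := by
    filter_upwards [hops.eventually_nhds] with s hs
    exact (hasDerivAt_log_prod_normConst hs (n + 1)).deriv
  rw [iteratedDeriv_succ, iteratedDeriv_one, hderiv.deriv_eq,
    (((hasDerivAt_nextCoeff hops n).const_mul a).const_sub _).deriv]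
  ring

end TodaFlow

theorem wfun_eq_expWeight (t γ : ℝ) (m : ℕ) :
    wfun t γ m = expWeight (-2) (-2 * (m + 1)) (wfun 0 γ m) t := by
  funext x
  simp only [wfun, expWeight, ← mul_assoc, mul_sub, ← Real.exp_add]
  ring_nf

/-- The Toda equation for the normalizing constants regarded as functions of `t` on
`(γ, ∞)`: `(d²/dt²) ln ∏_{k=0}^{N-1} h_k(t) = 4 h_N(t)/h_{N-1}(t)` for every `N ≥ 1`. -/
theorem toda_equation (γ : ℝ) (m : ℕ) (hγ : 0 < γ)
    (p : ℝ → ℕ → Polynomial ℝ) (h : ℝ → ℕ → ℝ)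
    (hops : ∀ t : ℝ, γ < t → IsMonicOPS (wfun t γ m) (p t) (h t))
    (N : ℕ) (hN : 1 ≤ N) (t : ℝ) (ht : γ < t) :
    iteratedDeriv 2 (fun s : ℝ => Real.log (∏ k ∈ Finset.range N, h s k)) t =
      4 * h t N / h t (N - 1) := by
  obtain ⟨n, rfl⟩ := Nat.exists_eq_add_of_le' hN
  have hexp : ∀ᶠ s in 𝓝 t,
      IsMonicOPS (expWeight (-2) (-2 * (m + 1)) (wfun 0 γ m) s) (p s) (h s) :=
    (lt_mem_nhds ht).mono fun s hs => wfun_eq_expWeight s γ m ▸ hops s hs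
  rw [toda_equation_general hexp n, Nat.add_sub_cancel]
  norm_num

end SixVertex
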